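/- Let T be a generalized star (a tree with exactly one vertex of degree ≥ 3) with at least three legs. Then T is well-failed if and only if T = K_{1,n} for some n ≥ 3 or T = star_{2,2,2}. -/

import Mathlib

variable {V : Type*} [Fintype V] [DecidableEq V]

/-- A fort: nonempty set such that no vertex outside has exactly one neighbor inside. -/
def Fort (G : SimpleGraph V) (W : Set V) : Prop :=
  W.Nonempty ∧ ∀ v ∉ W, ¬ ∃! w, w ∈ W ∧ G.Adj v w

/-- A minimal fort contains no fort as a proper subset. -/
def MinimalFort (G : SimpleGraph V) (W : Set V) : Prop :=
  Fort G W ∧ ∀ W', Fort G W' → W' ⊆ W → W' = W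

/-- The vertices that eventually get colored blue starting from `S`,
under the zero forcing color change rule. -/
inductive Blue (G : SimpleGraph V) (S : Set V) : V → Prop
  | init {v : V} (h : v ∈ S) : Blue G S v
  | force {u v : V} (hadj : G.Adj u v) (hu : Blue G S u)
      (h : ∀ w, G.Adj u w → w ≠ v → Blue G S w) : Blue G S v

/-- A zero forcing set colors every vertex blue. -/
def ZeroForcing (G : SimpleGraph V) (S : Set V) : Prop := ∀ v, Blue G S v

def MinimalZeroForcing (G : SimpleGraph V) (S : Set V) : Prop :=
  ZeroForcing G S ∧ ∀ S', ZeroForcing G S' → S' ⊆ S → S' = S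

/-- A stalled set: a proper subset of the vertex set from which no color change is possible. -/
def Stalled (G : SimpleGraph V) (S : Set V) : Prop :=
  S ≠ Set.univ ∧ ∀ u ∈ S, ¬ ∃! w, w ∉ S ∧ G.Adj u w

def MaximalStalled (G : SimpleGraph V) (S : Set V) : Prop :=
  Stalled G S ∧ ∀ S', Stalled G S' → S ⊆ S' → S' = S

def FailedSet (G : SimpleGraph V) (S : Set V) : Prop := ¬ ZeroForcing G S

def MaximalFailed (G : SimpleGraph V) (S : Set V) : Prop :=
  FailedSet G S ∧ ∀ v ∉ S, ZeroForcing G (insert v S)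


/-- The spider tree `star_{2,2,2}`: the subdivision of `K_{1,3}`, with center `0`
and legs `0-1-2`, `0-3-4`, `0-5-6`. -/
def star222 : SimpleGraph (Fin 7) :=
  SimpleGraph.fromRel (fun i j => (i.val, j.val) ∈ [(0,1), (1,2), (0,3), (3,4), (0,5), (5,6)])

/-!
Two consecutive vertices outside a fort propagate along their leg, so a fort that meets a leg leaves
no two consecutive vertices of that leg out and contains its leaf. A fort avoiding the center
contains the first vertices of at least two legs. For legs of lengths `a` and `b` there is a minimal
fort of this kind with `⌊a/2⌋ + ⌊b/2⌋ + 2` vertices, so with at least three legs well-failedness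
makes all the values `⌊len/2⌋` equal to one `q`. If `q = 0`, the tree is `K_{1,n}`. Otherwise there
is a minimal fort through the center, with `1 + ∑ ⌈len/2⌉ ≥ 1 + n q` vertices, and equating this
with `2 q + 2` leaves only `n = 3` legs of length `2`.
-/

section RootedTree

variable {α : Type*} {G : SimpleGraph α} {r u u' v v' : α}

theorem dist_getVert_of_length_eq_dist {p : G.Walk u v} (hp : p.length = G.dist u v) {j : ℕ}
    (hj : j ≤ p.length) : G.dist u (p.getVert j) = j := by
  rw [← SimpleGraph.length_eq_dist_of_subwalk hp (p.isSubwalk_take j), p.take_length,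
    min_eq_left hj]

/-- `v` is a child of `u` when `G` is rooted at `r`: an adjacent vertex one step further from the
root. A vertex without children is the far end of a leg. -/
def IsChild (G : SimpleGraph α) (r u v : α) : Prop :=
  G.Adj u v ∧ G.dist r v = G.dist r u + 1

theorem isChild_getVert_succ {p : G.Walk r v} (hp : p.length = G.dist r v) {j : ℕ}
    (hj : j < p.length) : IsChild G r (p.getVert j) (p.getVert (j + 1)) :=
  ⟨p.adj_getVert_succ hj, by
    rw [dist_getVert_of_length_eq_dist hp hj, dist_getVert_of_length_eq_dist hp hj.le]⟩

theorem exists_isChild_of_ne (hG : G.Connected) (hv : v ≠ r) : ∃ u, IsChild G r u v := by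
  obtain ⟨p, hp⟩ := hG.exists_walk_length_eq_dist r v
  have hpos : 0 < p.length := hp ▸ hG.pos_dist_of_ne hv.symm
  refine ⟨p.getVert (p.length - 1), ?_⟩
  simpa [Nat.sub_add_cancel hpos] using isChild_getVert_succ hp (Nat.sub_one_lt hpos.ne')

theorem IsChild.eq_of_isAcyclic (h : IsChild G r u v) (hG : G.IsAcyclic) (h' : IsChild G r u' v) :
    u = u' := by
  have isPath_concat_of_isChild {w : α} (hw : IsChild G r w v) :
      ∃ (p : G.Walk r w), (p.concat hw.1).IsPath := by
    have hreach : G.Reachable r w :=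
      (SimpleGraph.Reachable.of_dist_ne_zero (by have := hw.2; omega)).trans hw.1.symm.reachable
    obtain ⟨p, hp⟩ := hreach.exists_walk_length_eq_dist
    exact ⟨p, (p.concat hw.1).isPath_of_length_eq_dist (by rw [p.length_concat, hp, hw.2])⟩
  obtain ⟨p, hp⟩ := isPath_concat_of_isChild h
  obtain ⟨q, hq⟩ := isPath_concat_of_isChild h'
  have hpq : p.concat h.1 = q.concat h'.1 :=
    congrArg Subtype.val ((hG.subsingleton_path _ _).elim ⟨_, hp⟩ ⟨_, hq⟩)
  simpa using congrArg SimpleGraph.Walk.penultimate hpq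

theorem isChild_or_isChild_of_adj (hG : G.IsTree) (r : α) (h : G.Adj u v) :
    IsChild G r u v ∨ IsChild G r v u :=
  (hG.dist_eq_dist_add_one_of_adj r h).symm.imp (⟨h, ·⟩) (⟨h.symm, ·⟩)

theorem IsChild.eq_of_ncard_neighborSet_le_two [Finite α] (h : IsChild G r u v)
    (h' : IsChild G r u v') (hG : G.Connected) (hu : u ≠ r) (hdeg : (G.neighborSet u).ncard ≤ 2) :
    v = v' := by
  by_contra hvv'
  obtain ⟨t, ht⟩ := exists_isChild_of_ne hG hu
  have htv : t ≠ v := by rintro rfl; have := ht.2; have := h.2; omega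
  have htv' : t ≠ v' := by rintro rfl; have := ht.2; have := h'.2; omega
  have hsub : {t, v, v'} ⊆ G.neighborSet u := by
    rintro w (rfl | rfl | rfl)
    exacts [ht.1.symm, h.1, h'.1]
  have hcard : ({t, v, v'} : Set α).ncard = 3 :=
    Set.ncard_eq_three.2 ⟨t, v, v', htv, htv', hvv', rfl⟩
  have := Set.ncard_le_ncard hsub
  omega

theorem exists_childless_descendant [Finite α] (hG : G.IsTree) (r v : α) :
    ∃ e, (∀ w, ¬ IsChild G r e w) ∧ ∀ p : G.Walk r e, p.length = G.dist r e →
      G.dist r v ≤ p.length ∧ p.getVert (G.dist r v) = v := by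
  set good : Set α := {v | ∃ e, (∀ w, ¬ IsChild G r e w) ∧ ∀ p : G.Walk r e,
    p.length = G.dist r e → G.dist r v ≤ p.length ∧ p.getVert (G.dist r v) = v}
  change v ∈ good
  by_contra hv
  -- A bad vertex furthest from the root has a good child, whose descendant also serves the parent.
  obtain ⟨x, hx, hmax⟩ := Set.exists_max_image goodᶜ (G.dist r) (Set.toFinite _) ⟨v, hv⟩
  have hchild : ∃ y, IsChild G r x y := by
    by_contra! hx'
    exact hx ⟨x, hx', fun p hp => ⟨hp.ge, by rw [← hp, p.getVert_length]⟩⟩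
  obtain ⟨y, hxy⟩ := hchild
  have hy : y ∈ good := by
    by_contra hy
    have := hmax y hy
    have := hxy.2
    omega
  obtain ⟨e, he, hp⟩ := hy
  refine hx ⟨e, he, fun p hpe => ?_⟩
  obtain ⟨hle, hget⟩ := hp p hpe
  rw [hxy.2] at hle hget
  have hy' := isChild_getVert_succ hpe hle
  rw [hget] at hy'
  exact ⟨by omega, hy'.eq_of_isAcyclic hG.isAcyclic hxy⟩

theorem eq_of_getVert_succ_eq [Finite α] (hG : G.Connected)
    (hdeg : ∀ w, w ≠ r → (G.neighborSet w).ncard ≤ 2) (hv : ∀ w, ¬ IsChild G r v w)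
    (hv' : ∀ w, ¬ IsChild G r v' w) {p : G.Walk r v} {q : G.Walk r v'}
    (hp : p.length = G.dist r v) (hq : q.length = G.dist r v') {j : ℕ} (hjp : j + 1 ≤ p.length)
    (hjq : j + 1 ≤ q.length) (h : p.getVert (j + 1) = q.getVert (j + 1)) : v = v' := by
  have agree : ∀ k, j + 1 ≤ k → k ≤ p.length → k ≤ q.length → p.getVert k = q.getVert k := by
    intro k hk
    induction k, hk using Nat.le_induction with
    | base => exact fun _ _ => h
    | succ k hk ih =>
      intro hkp hkq
      have hpq := ih (by omega) (by omega)
      have hne : p.getVert k ≠ r := by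
        intro hr
        have := dist_getVert_of_length_eq_dist hp (j := k) (by omega)
        rw [hr, SimpleGraph.dist_self] at this
        omega
      exact (isChild_getVert_succ hp hkp).eq_of_ncard_neighborSet_le_two
        (hpq ▸ isChild_getVert_succ hq hkq) hG hne (hdeg _ hne)
  rcases lt_trichotomy p.length q.length with hlt | heq | hlt
  · have hend : v = q.getVert p.length := by simpa using agree p.length hjp le_rfl hlt.le
    have hchild := isChild_getVert_succ hq hlt
    rw [← hend] at hchild
    exact absurd hchild (hv _)
  · simpa [← heq, heq ▸ q.getVert_length] using agree p.length hjp le_rfl heq.le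
  · have hend : p.getVert q.length = v' := by simpa using agree q.length hjq hlt.le le_rfl
    have hchild := isChild_getVert_succ hp hlt
    rw [hend] at hchild
    exact absurd hchild (hv' _)

theorem eq_and_eq_of_getVert_eq [Finite α] (hG : G.Connected)
    (hdeg : ∀ w, w ≠ r → (G.neighborSet w).ncard ≤ 2) (hv : ∀ w, ¬ IsChild G r v w)
    (hv' : ∀ w, ¬ IsChild G r v' w) {p : G.Walk r v} {q : G.Walk r v'}
    (hp : p.length = G.dist r v) (hq : q.length = G.dist r v') {j j' : ℕ} (hj : j ≤ p.length)
    (hj' : j' ≤ q.length) (h : p.getVert j = q.getVert j') : j = j' ∧ (j = 0 ∨ v = v') := by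
  obtain rfl : j = j' := by
    rw [← dist_getVert_of_length_eq_dist hp hj, h, dist_getVert_of_length_eq_dist hq hj']
  refine ⟨rfl, j.eq_zero_or_pos.imp_right fun hpos => ?_⟩
  obtain ⟨k, rfl⟩ := Nat.exists_eq_add_one.2 hpos
  exact eq_of_getVert_succ_eq hG hdeg hv hv' hp hq hj hj' h

theorem eq_succ_and_eq_of_isChild_getVert [Finite α] (hG : G.IsTree)
    (hdeg : ∀ w, w ≠ r → (G.neighborSet w).ncard ≤ 2) (hv : ∀ w, ¬ IsChild G r v w)
    (hv' : ∀ w, ¬ IsChild G r v' w) {p : G.Walk r v} {q : G.Walk r v'}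
    (hp : p.length = G.dist r v) (hq : q.length = G.dist r v') {j j' : ℕ} (hj : j ≤ p.length)
    (hj' : j' ≤ q.length) (h : IsChild G r (p.getVert j) (q.getVert j')) :
    j' = j + 1 ∧ (j = 0 ∨ v = v') := by
  obtain rfl : j' = j + 1 := by
    simpa only [dist_getVert_of_length_eq_dist hp hj, dist_getVert_of_length_eq_dist hq hj']
      using h.2
  have hparent := h.eq_of_isAcyclic hG.isAcyclic (isChild_getVert_succ hq hj')
  exact ⟨rfl, (eq_and_eq_of_getVert_eq hG.connected hdeg hv hv' hp hq hj (by omega) hparent).2⟩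

end RootedTree

/-- A parametrization of a generalized star `G` with center `c` by its legs, indexed by `ι`:
`vert i j` is the vertex at distance `j` from the center on leg `i`, of length `len i`. The center
is position `0` of every leg, and `vert i j` is meaningless for `j > len i`. -/
structure LegDecomposition {α : Type*} (G : SimpleGraph α) (c : α) (ι : Type*) where
  len : ι → ℕ
  vert : ι → ℕ → α
  vert_zero : ∀ i, vert i 0 = c
  len_pos : ∀ i, 1 ≤ len i
  exists_vert_eq : ∀ v, ∃ i, ∃ j ≤ len i, vert i j = v
  vert_inj : ∀ {i i' j j'}, j ≤ len i → j' ≤ len i' → vert i j = vert i' j' →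
    j = j' ∧ (j = 0 ∨ i = i')
  adj_iff : ∀ {i i' j j'}, j ≤ len i → j' ≤ len i' →
    (G.Adj (vert i j) (vert i' j') ↔ (j' = j + 1 ∨ j = j' + 1) ∧ (j = 0 ∨ j' = 0 ∨ i = i'))

theorem nonempty_legDecomposition {α : Type*} [Finite α] {G : SimpleGraph α} {c : α}
    (hG : G.IsTree) (hc : (G.neighborSet c).Nonempty)
    (hdeg : ∀ w, w ≠ c → (G.neighborSet w).ncard ≤ 2) :
    Nonempty (LegDecomposition G c {e // ∀ w, ¬ IsChild G c e w}) := by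
  choose p hp using fun e : {e // ∀ w, ¬ IsChild G c e w} =>
    hG.connected.exists_walk_length_eq_dist c e
  have eq_succ_of_isChild {i i' j j'} (hj : j ≤ (p i).length) (hj' : j' ≤ (p i').length)
      (h : IsChild G c ((p i).getVert j) ((p i').getVert j')) :
      j' = j + 1 ∧ (j = 0 ∨ i = i') := by
    simpa only [Subtype.ext_iff] using
      eq_succ_and_eq_of_isChild_getVert hG hdeg i.2 i'.2 (hp i) (hp i') hj hj' h
  have adj_succ {i i' j} (hj : j + 1 ≤ (p i').length) (h : j = 0 ∨ i = i') :
      G.Adj ((p i).getVert j) ((p i').getVert (j + 1)) := by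
    have hadj := (p i').adj_getVert_succ hj
    rcases h with rfl | rfl
    · simpa using hadj
    · exact hadj
  refine ⟨⟨fun i => (p i).length, fun i => (p i).getVert, fun i => (p i).getVert_zero, ?_, ?_,
    ?_, fun hj hj' => ⟨fun h => ?_, ?_⟩⟩⟩
  · rintro ⟨e, he⟩
    have hec : e ≠ c := by
      rintro rfl
      obtain ⟨w, hw⟩ := hc
      exact he w ⟨hw, by simpa using SimpleGraph.dist_eq_one_iff_adj.2 hw⟩
    exact hp ⟨e, he⟩ ▸ hG.connected.pos_dist_of_ne hec.symm
  · intro v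
    obtain ⟨e, he, hv⟩ := exists_childless_descendant hG c v
    exact ⟨⟨e, he⟩, G.dist c v, hv _ (hp _)⟩
  · intro i i' j j' hj hj' h
    simpa only [Subtype.ext_iff] using
      eq_and_eq_of_getVert_eq hG.connected hdeg i.2 i'.2 (hp i) (hp i') hj hj' h
  · rcases isChild_or_isChild_of_adj hG c h with h | h
    · have := eq_succ_of_isChild hj hj' h
      tauto
    · have := eq_succ_of_isChild hj' hj h
      tauto
  · rintro ⟨rfl | rfl, h⟩
    · exact adj_succ hj' (by tauto)
    · exact (adj_succ hj (by tauto)).symm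

/-- A graph is well-failed if all its minimal forts have the same cardinality. -/
def WellFailed {α : Type*} (G : SimpleGraph α) : Prop :=
  ∀ W W' : Set α, MinimalFort G W → MinimalFort G W' → W.ncard = W'.ncard

theorem fort_iff_exists_ne {α : Type*} {G : SimpleGraph α} {W : Set α} :
    Fort G W ↔ W.Nonempty ∧
      ∀ v ∉ W, ∀ w ∈ W, G.Adj v w → ∃ w' ∈ W, w' ≠ w ∧ G.Adj v w' := by
  refine and_congr_right fun _ => forall₂_congr fun v _ => ?_
  simp only [ExistsUnique, not_exists, not_and, not_forall, exists_prop]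
  exact forall_congr' fun w => by tauto

namespace LegDecomposition

variable {α β ι κ : Type*} {G : SimpleGraph α} {H : SimpleGraph β} {c : α} {d : β}

section Adjacency

variable (L : LegDecomposition G c ι)

theorem vert_eq_vert_iff {i i' : ι} {j j' : ℕ} (hj : j ≤ L.len i) (hj' : j' ≤ L.len i') :
    L.vert i j = L.vert i' j' ↔ j = j' ∧ (j = 0 ∨ i = i') := by
  refine ⟨L.vert_inj hj hj', ?_⟩
  rintro ⟨rfl, rfl | rfl⟩
  exacts [(L.vert_zero i).trans (L.vert_zero i').symm, rfl]

theorem vert_eq_center_iff {i : ι} {j : ℕ} (hj : j ≤ L.len i) : L.vert i j = c ↔ j = 0 := by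
  have := L.vert_eq_vert_iff hj (Nat.zero_le (L.len i))
  rw [L.vert_zero] at this
  tauto

theorem adj_center_iff {w : α} : G.Adj c w ↔ ∃ i, w = L.vert i 1 := by
  obtain ⟨i', j', hj', rfl⟩ := L.exists_vert_eq w
  have hadj := L.adj_iff (Nat.zero_le (L.len i')) hj'
  rw [L.vert_zero] at hadj
  simp only [hadj, L.vert_eq_vert_iff hj' (L.len_pos _)]
  grind

theorem adj_vert_succ_iff {i : ι} {j : ℕ} (hj : j + 1 ≤ L.len i) {w : α} :
    G.Adj (L.vert i (j + 1)) w ↔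
      w = L.vert i j ∨ (j + 2 ≤ L.len i ∧ w = L.vert i (j + 2)) := by
  obtain ⟨i', j', hj', rfl⟩ := L.exists_vert_eq w
  rw [L.adj_iff hj hj', L.vert_eq_vert_iff hj' (by omega)]
  by_cases hj2 : j + 2 ≤ L.len i
  · rw [L.vert_eq_vert_iff hj' hj2]
    grind
  · grind

theorem natCard_eq_ncard_neighborSet (L : LegDecomposition G c ι) :
    Nat.card ι = (G.neighborSet c).ncard := by
  have hinj : Function.Injective (L.vert · 1) := fun i i' h => by
    simpa using (L.vert_inj (L.len_pos i) (L.len_pos i') h).2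
  rw [← Set.ncard_range_of_injective hinj]
  congr 1
  ext w
  simp [L.adj_center_iff, eq_comm]

theorem forall_len_eq_one_iff :
    (∀ i, L.len i = 1) ↔ ∀ w, w ≠ c → (G.neighborSet w).ncard = 1 := by
  constructor
  · intro hlen w hw
    obtain ⟨i, j, hj, rfl⟩ := L.exists_vert_eq w
    obtain rfl : j = 0 + 1 := by
      have := hlen i
      have := (L.vert_eq_center_iff hj).not.1 hw
      omega
    refine Set.ncard_eq_one.2 ⟨L.vert i 0, Set.ext fun y => ?_⟩
    simp [L.adj_vert_succ_iff hj, hlen i]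
  · intro hdeg i
    by_contra hlen
    have hlen : 2 ≤ L.len i := by have := L.len_pos i; omega
    have hne : L.vert i 1 ≠ c := (L.vert_eq_center_iff (L.len_pos i)).not.2 one_ne_zero
    obtain ⟨y, hy⟩ := Set.ncard_eq_one.1 (hdeg _ hne)
    have hmem : ∀ w, G.Adj (L.vert i 1) w → w = y := fun w hw => by
      simpa [hy] using (SimpleGraph.mem_neighborSet G _ w).2 hw
    have h0 := hmem _ ((L.adj_vert_succ_iff (L.len_pos i)).2 (Or.inl rfl))
    have h2 := hmem _ ((L.adj_vert_succ_iff (L.len_pos i)).2 (Or.inr ⟨hlen, rfl⟩))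
    simpa using (L.vert_inj (Nat.zero_le _) hlen (h0.trans h2.symm)).1

theorem nonempty_iso (L' : LegDecomposition H d κ) (e : ι ≃ κ)
    (hlen : ∀ i, L'.len (e i) = L.len i) : Nonempty (G ≃g H) := by
  choose leg pos hpos hvert using L.exists_vert_eq
  have hpos' (v : α) : pos v ≤ L'.len (e (leg v)) := (hlen (leg v)).symm ▸ hpos v
  let f : α → β := fun v => L'.vert (e (leg v)) (pos v)
  have hinj : Function.Injective f := fun v w h => by
    rw [← hvert v, ← hvert w, L.vert_eq_vert_iff (hpos v) (hpos w)]
    simpa using L'.vert_inj (hpos' v) (hpos' w) h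
  have hsurj : Function.Surjective f := fun y => by
    obtain ⟨k, j, hj, rfl⟩ := L'.exists_vert_eq y
    obtain ⟨i, rfl⟩ := e.surjective k
    have hij := L.vert_inj (hpos _) (hlen i ▸ hj) (hvert (L.vert i j))
    refine ⟨L.vert i j, (L'.vert_eq_vert_iff (hpos' _) hj).2 ?_⟩
    simpa using hij
  refine ⟨⟨Equiv.ofBijective f ⟨hinj, hsurj⟩, fun {v w} => ?_⟩⟩
  conv_rhs => rw [← hvert v, ← hvert w, L.adj_iff (hpos v) (hpos w)]
  exact (L'.adj_iff (hpos' v) (hpos' w)).trans (by rw [e.apply_eq_iff_eq])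

/-- The leg decomposition transported along a graph isomorphism. -/
def map (e : G ≃g H) : LegDecomposition H (e c) ι where
  len := L.len
  vert i j := e (L.vert i j)
  vert_zero i := by rw [L.vert_zero]
  len_pos := L.len_pos
  exists_vert_eq v := by
    obtain ⟨i, j, hj, h⟩ := L.exists_vert_eq (e.symm v)
    exact ⟨i, j, hj, by simp [h]⟩
  vert_inj hj hj' h := L.vert_inj hj hj' (e.injective h)
  adj_iff hj hj' := e.map_adj_iff.trans (L.adj_iff hj hj')

end Adjacency

section Fort

variable (L : LegDecomposition G c ι) {W : Set α} {i : ι} {j k : ℕ}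

theorem fort_iff : Fort G W ↔ W.Nonempty ∧
    (c ∉ W → ∀ i, L.vert i 1 ∈ W → ∃ i', i' ≠ i ∧ L.vert i' 1 ∈ W) ∧
    ∀ i j, j + 1 ≤ L.len i → L.vert i (j + 1) ∉ W →
      (L.vert i j ∈ W ↔ j + 2 ≤ L.len i ∧ L.vert i (j + 2) ∈ W) := by
  rw [fort_iff_exists_ne]
  refine and_congr_right fun _ => ?_
  have center_iff : (∀ w ∈ W, G.Adj c w → ∃ w' ∈ W, w' ≠ w ∧ G.Adj c w') ↔
      ∀ i, L.vert i 1 ∈ W → ∃ i', i' ≠ i ∧ L.vert i' 1 ∈ W := by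
    have vert_one_iff {i i' : ι} : L.vert i' 1 = L.vert i 1 ↔ i' = i := by
      simp [L.vert_eq_vert_iff (L.len_pos i') (L.len_pos i)]
    simp only [L.adj_center_iff]
    constructor
    · intro h i hi
      obtain ⟨_, hmem, hne, i', rfl⟩ := h _ hi ⟨i, rfl⟩
      exact ⟨i', vert_one_iff.not.1 hne, hmem⟩
    · rintro h _ hi ⟨i, rfl⟩
      obtain ⟨i', hne, hi'⟩ := h i hi
      exact ⟨_, hi', vert_one_iff.not.2 hne, i', rfl⟩
  have vert_succ_iff {i : ι} {j : ℕ} (hj : j + 1 ≤ L.len i) :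
      (∀ w ∈ W, G.Adj (L.vert i (j + 1)) w →
        ∃ w' ∈ W, w' ≠ w ∧ G.Adj (L.vert i (j + 1)) w') ↔
      (L.vert i j ∈ W ↔ j + 2 ≤ L.len i ∧ L.vert i (j + 2) ∈ W) := by
    have hne (hj2 : j + 2 ≤ L.len i) : L.vert i j ≠ L.vert i (j + 2) := fun h => by
      simpa using (L.vert_inj (by omega) hj2 h).1
    simp only [L.adj_vert_succ_iff hj]
    grind
  rw [← center_iff]
  constructor
  · exact fun h => ⟨fun hc => h c hc, fun i j hj hv => (vert_succ_iff hj).1 (h _ hv)⟩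
  · rintro ⟨hcenter, hleg⟩ v hv
    obtain ⟨i, j, hj, rfl⟩ := L.exists_vert_eq v
    cases j with
    | zero =>
      rw [L.vert_zero] at hv ⊢
      exact hcenter hv
    | succ j => exact (vert_succ_iff hj).2 (hleg i j hj hv)

theorem vert_notMem_and_vert_succ_notMem_iff (hW : Fort G W) (hj : j + 1 ≤ L.len i) :
    (L.vert i j ∉ W ∧ L.vert i (j + 1) ∉ W) ↔ (L.vert i 0 ∉ W ∧ L.vert i 1 ∉ W) := by
  induction j with
  | zero => rfl
  | succ j ih =>
    have hrule := ((L.fort_iff).1 hW).2.2 i j (by omega)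
    rw [← ih (by omega)]
    tauto

theorem vert_mem_or_vert_succ_mem (hW : Fort G W) (hk : k ≤ L.len i) (hmem : L.vert i k ∈ W)
    (hj : j + 1 ≤ L.len i) : L.vert i j ∈ W ∨ L.vert i (j + 1) ∈ W := by
  by_contra! hout
  have hzero := (L.vert_notMem_and_vert_succ_notMem_iff hW hj).1 hout
  cases k with
  | zero => exact hzero.1 hmem
  | succ k => exact ((L.vert_notMem_and_vert_succ_notMem_iff hW hk).2 hzero).2 hmem

theorem vert_len_mem (hW : Fort G W) (hk : k ≤ L.len i) (hmem : L.vert i k ∈ W) :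
    L.vert i (L.len i) ∈ W := by
  obtain ⟨n, hn⟩ := Nat.exists_eq_add_one.2 (L.len_pos i)
  by_contra hout
  rw [hn] at hout
  have hrule := ((L.fort_iff).1 hW).2.2 i n hn.ge hout
  have hor := L.vert_mem_or_vert_succ_mem hW hk hmem hn.ge
  have : ¬ n + 2 ≤ L.len i := by omega
  tauto

theorem exists_vert_one_mem (hW : Fort G W) (hc : c ∉ W) :
    ∃ i i', i ≠ i' ∧ L.vert i 1 ∈ W ∧ L.vert i' 1 ∈ W := by
  obtain ⟨v, hv⟩ := hW.1
  obtain ⟨i, k, hk, rfl⟩ := L.exists_vert_eq v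
  have hi : L.vert i 1 ∈ W :=
    (L.vert_mem_or_vert_succ_mem hW hk hv (j := 0) (L.len_pos i)).resolve_left
      (by rwa [L.vert_zero])
  obtain ⟨i', hne, hi'⟩ := ((L.fort_iff).1 hW).2.1 hc i hi
  exact ⟨i, i', hne.symm, hi, hi'⟩

end Fort

section Positions

/-- The positions, on a leg of length `n`, of the vertices of a fort that avoids the center: the
first one, then every other one counted back from the leaf. -/
def twoLegPositions (n : ℕ) : Finset ℕ := {j ∈ Finset.Icc 1 n | j = 1 ∨ j % 2 = n % 2}

/-- The noncentral positions, on a leg of length `n`, of the vertices of a fort through the center: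
every other one counted from the center, and the leaf. -/
def centralPositions (n : ℕ) : Finset ℕ := {j ∈ Finset.Icc 1 n | j % 2 = 0 ∨ j = n}

theorem mem_twoLegPositions {n j : ℕ} :
    j ∈ twoLegPositions n ↔ (1 ≤ j ∧ j ≤ n) ∧ (j = 1 ∨ j % 2 = n % 2) := by
  simp [twoLegPositions]

theorem mem_centralPositions {n j : ℕ} :
    j ∈ centralPositions n ↔ (1 ≤ j ∧ j ≤ n) ∧ (j % 2 = 0 ∨ j = n) := by
  simp [centralPositions]

theorem twoLegPositions_subset (n : ℕ) : twoLegPositions n ⊆ Finset.Icc 1 n :=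
  Finset.filter_subset _ _

theorem centralPositions_subset (n : ℕ) : centralPositions n ⊆ Finset.Icc 1 n :=
  Finset.filter_subset _ _

theorem card_twoLegPositions {n : ℕ} (hn : 1 ≤ n) : (twoLegPositions n).card = n / 2 + 1 := by
  rw [← Finset.card_range (n / 2 + 1)]
  refine Finset.card_nbij' (· / 2) (fun t => if t = 0 then 1 else 2 * t + n % 2) ?_ ?_ ?_ ?_ <;>
    intro j hj <;>
    simp only [Finset.mem_coe, mem_twoLegPositions, Finset.mem_range] at hj ⊢ <;>
    grind

theorem card_centralPositions (n : ℕ) : (centralPositions n).card = (n + 1) / 2 := by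
  rw [← Finset.card_range ((n + 1) / 2)]
  refine Finset.card_nbij' (fun j => (j - 1) / 2) (fun t => min (2 * t + 2) n) ?_ ?_ ?_ ?_ <;>
    intro j hj <;>
    simp only [Finset.mem_coe, mem_centralPositions, Finset.mem_range] at hj ⊢ <;>
    omega

end Positions

section LegUnion

variable (L : LegDecomposition G c ι) {s : Finset ι} {P : ι → Finset ℕ}

/-- The set of vertices at the positions `P i` on the legs `i ∈ s`. -/
def legUnion (s : Finset ι) (P : ι → Finset ℕ) : Set α :=
  {v | ∃ i ∈ s, ∃ j ∈ P i, L.vert i j = v}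

theorem vert_mem_legUnion_iff (hP : ∀ i ∈ s, P i ⊆ Finset.Icc 1 (L.len i)) {i : ι} {j : ℕ}
    (hj : j ≤ L.len i) : L.vert i j ∈ L.legUnion s P ↔ i ∈ s ∧ j ∈ P i := by
  refine ⟨?_, fun ⟨hi, hj⟩ => ⟨i, hi, j, hj, rfl⟩⟩
  rintro ⟨i', hi', j', hj', h⟩
  have hIcc := Finset.mem_Icc.1 (hP i' hi' hj')
  obtain ⟨rfl, hzero | rfl⟩ := L.vert_inj hIcc.2 hj h
  · omega
  · exact ⟨hi', hj'⟩

theorem legUnion_subset_iff {W : Set α} :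
    L.legUnion s P ⊆ W ↔ ∀ i ∈ s, ∀ j ∈ P i, L.vert i j ∈ W :=
  ⟨fun h i hi j hj => h ⟨i, hi, j, hj, rfl⟩, by rintro h _ ⟨i, hi, j, hj, rfl⟩; exact h i hi j hj⟩

theorem center_notMem_legUnion (hP : ∀ i ∈ s, P i ⊆ Finset.Icc 1 (L.len i)) :
    c ∉ L.legUnion s P := by
  rintro ⟨i, hi, j, hj, h⟩
  have hIcc := Finset.mem_Icc.1 (hP i hi hj)
  have := (L.vert_eq_center_iff hIcc.2).1 h
  omega

theorem legUnion_eq_coe_image [DecidableEq α] :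
    L.legUnion s P = ((s.sigma P).image fun x => L.vert x.1 x.2 : Finset α) := by
  ext v
  simp [legUnion, and_assoc]

theorem finite_legUnion : (L.legUnion s P).Finite := by
  classical
  rw [L.legUnion_eq_coe_image]
  exact Finset.finite_toSet _

theorem ncard_legUnion (hP : ∀ i ∈ s, P i ⊆ Finset.Icc 1 (L.len i)) :
    (L.legUnion s P).ncard = ∑ i ∈ s, (P i).card := by
  classical
  rw [L.legUnion_eq_coe_image, Set.ncard_coe_finset, Finset.card_image_of_injOn,
    Finset.card_sigma]
  rintro ⟨i, j⟩ h ⟨i', j'⟩ h' heq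
  simp only [Finset.mem_coe, Finset.mem_sigma] at h h'
  have hj := Finset.mem_Icc.1 (hP i h.1 h.2)
  have hj' := Finset.mem_Icc.1 (hP i' h'.1 h'.2)
  obtain ⟨rfl, hzero | rfl⟩ := L.vert_inj hj.2 hj'.2 heq
  · omega
  · rfl

end LegUnion

section TwoLegFort

variable [DecidableEq ι] (L : LegDecomposition G c ι) {a b i : ι} {j : ℕ}

/-- The fort that avoids the center and meets exactly the legs `a` and `b`. -/
def twoLegFort (a b : ι) : Set α := L.legUnion {a, b} fun i => twoLegPositions (L.len i)

theorem vert_mem_twoLegFort_iff (hj : j ≤ L.len i) :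
    L.vert i j ∈ L.twoLegFort a b ↔ (i = a ∨ i = b) ∧ j ∈ twoLegPositions (L.len i) := by
  rw [twoLegFort, L.vert_mem_legUnion_iff (fun _ _ => twoLegPositions_subset _) hj,
    Finset.mem_insert, Finset.mem_singleton]

theorem center_notMem_twoLegFort : c ∉ L.twoLegFort a b :=
  L.center_notMem_legUnion fun _ _ => twoLegPositions_subset _

theorem fort_twoLegFort (hab : a ≠ b) : Fort G (L.twoLegFort a b) := by
  have vert_one_mem_iff {i : ι} : L.vert i 1 ∈ L.twoLegFort a b ↔ i = a ∨ i = b := by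
    simp [L.vert_mem_twoLegFort_iff (L.len_pos i), mem_twoLegPositions, L.len_pos i]
  refine L.fort_iff.2 ⟨⟨L.vert a 1, vert_one_mem_iff.2 (Or.inl rfl)⟩, fun _ i hi => ?_, ?_⟩
  · simp only [vert_one_mem_iff] at hi ⊢
    rcases hi with rfl | rfl
    exacts [⟨b, hab.symm, Or.inr rfl⟩, ⟨a, hab, Or.inl rfl⟩]
  · intro i j hj hout
    by_cases hj2 : j + 2 ≤ L.len i
    · rw [L.vert_mem_twoLegFort_iff hj, mem_twoLegPositions] at hout
      rw [L.vert_mem_twoLegFort_iff (by omega), L.vert_mem_twoLegFort_iff hj2,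
        mem_twoLegPositions, mem_twoLegPositions]
      by_cases hi : i = a ∨ i = b
      · simp only [hi, true_and] at hout ⊢
        omega
      · simp [hi]
    · rw [L.vert_mem_twoLegFort_iff hj, mem_twoLegPositions] at hout
      rw [L.vert_mem_twoLegFort_iff (by omega)]
      have hlast : j + 1 = L.len i := by omega
      exact iff_of_false (fun h => hout ⟨h.1, ⟨by omega, hj⟩, Or.inr (by rw [hlast])⟩)
        (fun h => hj2 h.1)

theorem minimalFort_twoLegFort (hab : a ≠ b) : MinimalFort G (L.twoLegFort a b) := by
  refine ⟨L.fort_twoLegFort hab, fun W hW hsub => hsub.antisymm ?_⟩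
  have mem_positions {i : ι} {j : ℕ} (hj : j ≤ L.len i) (hmem : L.vert i j ∈ W) :=
    (L.vert_mem_twoLegFort_iff hj).1 (hsub hmem)
  have vert_one_mem : ∀ i ∈ ({a, b} : Finset ι), L.vert i 1 ∈ W := by
    obtain ⟨i, i', hne, hi, hi'⟩ :=
      L.exists_vert_one_mem hW fun hc => L.center_notMem_twoLegFort (hsub hc)
    have := (mem_positions (L.len_pos i) hi).1
    have := (mem_positions (L.len_pos i') hi').1
    grind
  refine L.legUnion_subset_iff.2 fun i hi j hj => ?_
  obtain ⟨⟨hj1, hjlen⟩, hj'⟩ := mem_twoLegPositions.1 hj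
  have hfirst := vert_one_mem i hi
  rcases hjlen.eq_or_lt with rfl | hlt
  · exact L.vert_len_mem hW (L.len_pos i) hfirst
  · rcases hj1.eq_or_lt with rfl | hlt1
    · exact hfirst
    · refine (L.vert_mem_or_vert_succ_mem hW (L.len_pos i) hfirst hlt).resolve_right fun hsucc => ?_
      have := mem_twoLegPositions.1 (mem_positions hlt hsucc).2
      omega

theorem ncard_twoLegFort (hab : a ≠ b) :
    (L.twoLegFort a b).ncard = L.len a / 2 + L.len b / 2 + 2 := by
  rw [twoLegFort, L.ncard_legUnion fun _ _ => twoLegPositions_subset _, Finset.sum_pair hab,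
    card_twoLegPositions (L.len_pos a), card_twoLegPositions (L.len_pos b)]
  omega

end TwoLegFort

section CentralFort

variable [Fintype ι] (L : LegDecomposition G c ι) {i : ι} {j : ℕ}

/-- The fort through the center that is minimal when all legs have length at least `2`. -/
def centralFort : Set α := insert c (L.legUnion Finset.univ fun i => centralPositions (L.len i))

theorem vert_mem_centralFort_iff (hj : j ≤ L.len i) :
    L.vert i j ∈ L.centralFort ↔ j % 2 = 0 ∨ j = L.len i := by
  rw [centralFort, Set.mem_insert_iff, L.vert_eq_center_iff hj,
    L.vert_mem_legUnion_iff (fun _ _ => centralPositions_subset _) hj, mem_centralPositions]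
  have := L.len_pos i
  simp only [Finset.mem_univ, true_and]
  omega

theorem center_mem_centralFort : c ∈ L.centralFort := Set.mem_insert _ _

theorem fort_centralFort : Fort G L.centralFort := by
  refine L.fort_iff.2 ⟨⟨c, L.center_mem_centralFort⟩,
    fun hc => absurd L.center_mem_centralFort hc, fun i j hj hout => ?_⟩
  rw [L.vert_mem_centralFort_iff hj] at hout
  have hj2 : j + 2 ≤ L.len i := by omega
  rw [L.vert_mem_centralFort_iff (by omega), L.vert_mem_centralFort_iff hj2]
  omega

theorem minimalFort_centralFort (hlen : ∀ i, 2 ≤ L.len i) : MinimalFort G L.centralFort := by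
  refine ⟨L.fort_centralFort, fun W hW hsub => hsub.antisymm ?_⟩
  have hc : c ∈ W := by
    by_contra hc
    obtain ⟨i, -, -, hi, -⟩ := L.exists_vert_one_mem hW hc
    have := (L.vert_mem_centralFort_iff (L.len_pos i)).1 (hsub hi)
    have := hlen i
    omega
  refine Set.insert_subset hc (L.legUnion_subset_iff.2 fun i _ j hj => ?_)
  obtain ⟨⟨hj1, hjlen⟩, hj'⟩ := mem_centralPositions.1 hj
  have hzero : L.vert i 0 ∈ W := by rwa [L.vert_zero]
  rcases hj' with heven | rfl
  · obtain ⟨k, rfl⟩ := Nat.exists_eq_add_one.2 hj1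
    refine (L.vert_mem_or_vert_succ_mem hW (Nat.zero_le _) hzero hjlen).resolve_left fun hpred => ?_
    have := (L.vert_mem_centralFort_iff (by omega)).1 (hsub hpred)
    omega
  · exact L.vert_len_mem hW (Nat.zero_le _) hzero

theorem ncard_centralFort : L.centralFort.ncard = ∑ i, (L.len i + 1) / 2 + 1 := by
  have hP : ∀ i ∈ Finset.univ, centralPositions (L.len i) ⊆ Finset.Icc 1 (L.len i) :=
    fun _ _ => centralPositions_subset _
  rw [centralFort, Set.ncard_insert_of_notMem (L.center_notMem_legUnion hP) L.finite_legUnion,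
    L.ncard_legUnion hP]
  simp only [card_centralPositions]

end CentralFort

section ShortLegs

variable (L : LegDecomposition G c ι) {W : Set α}

theorem twoLegFort_subset [DecidableEq ι] {a b : ι} (hlen : ∀ i, L.len i ≤ 2) (hW : Fort G W)
    (ha : L.vert a 1 ∈ W) (hb : L.vert b 1 ∈ W) : L.twoLegFort a b ⊆ W := by
  refine L.legUnion_subset_iff.2 fun i hi j hj => ?_
  have hfirst : L.vert i 1 ∈ W := by
    rcases Finset.mem_insert.1 hi with rfl | hi
    exacts [ha, Finset.mem_singleton.1 hi ▸ hb]
  have hlast := L.vert_len_mem hW (L.len_pos i) hfirst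
  obtain ⟨⟨hj1, hjlen⟩, hj'⟩ := mem_twoLegPositions.1 hj
  obtain rfl | rfl : j = 1 ∨ j = L.len i := by have := hlen i; omega
  exacts [hfirst, hlast]

theorem centralFort_subset [Fintype ι] (hlen : ∀ i, L.len i ≤ 2) (hW : Fort G W) (hc : c ∈ W) :
    L.centralFort ⊆ W := by
  refine Set.insert_subset hc (L.legUnion_subset_iff.2 fun i _ j hj => ?_)
  obtain ⟨⟨hj1, hjlen⟩, hj'⟩ := mem_centralPositions.1 hj
  obtain rfl : j = L.len i := by have := hlen i; omega
  exact L.vert_len_mem hW (Nat.zero_le _) (by rwa [L.vert_zero])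

theorem eq_twoLegFort_or_eq_centralFort [DecidableEq ι] [Fintype ι] (hlen : ∀ i, L.len i ≤ 2)
    (hW : MinimalFort G W) : (∃ a b, a ≠ b ∧ W = L.twoLegFort a b) ∨ W = L.centralFort := by
  by_cases hc : c ∈ W
  · exact Or.inr (hW.2 _ L.fort_centralFort (L.centralFort_subset hlen hW.1 hc)).symm
  · obtain ⟨a, b, hab, ha, hb⟩ := L.exists_vert_one_mem hW.1 hc
    exact Or.inl ⟨a, b, hab,
      (hW.2 _ (L.fort_twoLegFort hab) (L.twoLegFort_subset hlen hW.1 ha hb)).symm⟩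

end ShortLegs

section WellFailed

theorem wellFailed_of_len_eq_one [Nontrivial ι] (L : LegDecomposition G c ι)
    (hlen : ∀ i, L.len i = 1) : WellFailed G := by
  classical
  suffices h : ∀ W, MinimalFort G W → W.ncard = 2 from fun W W' hW hW' =>
    (h W hW).trans (h W' hW').symm
  intro W hW
  obtain ⟨a, b, hab, ha, hb⟩ : ∃ a b, a ≠ b ∧ L.vert a 1 ∈ W ∧ L.vert b 1 ∈ W := by
    by_cases hc : c ∈ W
    · have hleaf (i : ι) : L.vert i 1 ∈ W :=
        hlen i ▸ L.vert_len_mem hW.1 (Nat.zero_le (L.len i)) (by rwa [L.vert_zero])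
      obtain ⟨a, b, hab⟩ := exists_pair_ne ι
      exact ⟨a, b, hab, hleaf a, hleaf b⟩
    · exact L.exists_vert_one_mem hW.1 hc
  have hsub := L.twoLegFort_subset (fun i => (hlen i).trans_le one_le_two) hW.1 ha hb
  rw [← hW.2 _ (L.fort_twoLegFort hab) hsub, L.ncard_twoLegFort hab, hlen, hlen]

theorem len_div_two_eq_of_wellFailed (L : LegDecomposition G c ι) (hι : 3 ≤ ENat.card ι)
    (hG : WellFailed G) (a b : ι) : L.len a / 2 = L.len b / 2 := by
  classical
  obtain ⟨d, hda, hdb⟩ := ENat.exists_ne_ne_of_three_le hι a b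
  have h := hG _ _ (L.minimalFort_twoLegFort hda) (L.minimalFort_twoLegFort hdb)
  rw [L.ncard_twoLegFort hda, L.ncard_twoLegFort hdb] at h
  omega

variable [Fintype ι] (L : LegDecomposition G c ι)

theorem wellFailed_of_len_eq_two (hι : Fintype.card ι = 3) (hlen : ∀ i, L.len i = 2) :
    WellFailed G := by
  classical
  suffices h : ∀ W, MinimalFort G W → W.ncard = 4 from fun W W' hW hW' =>
    (h W hW).trans (h W' hW').symm
  intro W hW
  rcases L.eq_twoLegFort_or_eq_centralFort (by simp [hlen]) hW with ⟨a, b, hab, rfl⟩ | rfl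
  · simp [L.ncard_twoLegFort hab, hlen]
  · simp [L.ncard_centralFort, hlen, hι]

theorem card_eq_three_and_len_eq_two_of_wellFailed (h3 : 3 ≤ Fintype.card ι)
    (hlen : ∀ i, 2 ≤ L.len i) (hG : WellFailed G) : Fintype.card ι = 3 ∧ ∀ i, L.len i = 2 := by
  classical
  obtain ⟨a, b, hab⟩ := Fintype.exists_pair_of_one_lt_card (by omega : 1 < Fintype.card ι)
  have hhalf (i : ι) : L.len i / 2 = L.len a / 2 :=
    L.len_div_two_eq_of_wellFailed (by simpa using h3) hG i a
  have hsum : ∑ i, (L.len i + 1) / 2 = 2 * (L.len a / 2) + 1 := by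
    have h := hG _ _ (L.minimalFort_twoLegFort hab) (L.minimalFort_centralFort hlen)
    rw [L.ncard_twoLegFort hab, L.ncard_centralFort, hhalf b] at h
    omega
  have hle : Fintype.card ι * (L.len a / 2) ≤ 2 * (L.len a / 2) + 1 := by
    rw [← hsum, ← smul_eq_mul]
    exact Finset.card_nsmul_le_sum _ _ _ fun i _ => by have := hhalf i; omega
  have hpos : 1 ≤ L.len a / 2 := by have := hlen a; omega
  have hone : L.len a / 2 = 1 := by nlinarith
  have hcard : Fintype.card ι = 3 := by rw [hone] at hle; omega
  have hceil : ∑ _i : ι, 1 = ∑ i, (L.len i + 1) / 2 := by simp [hsum, hone, hcard]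
  have hceil' := (Finset.sum_eq_sum_iff_of_le fun i _ => by have := hlen i; omega).1 hceil
  exact ⟨hcard, fun i => by have := hlen i; have := hceil' i (Finset.mem_univ i); omega⟩

theorem wellFailed_iff (h3 : 3 ≤ Fintype.card ι) :
    WellFailed G ↔ (∀ i, L.len i = 1) ∨ (Fintype.card ι = 3 ∧ ∀ i, L.len i = 2) := by
  constructor
  · intro hG
    by_cases hshort : ∃ a, L.len a = 1
    · obtain ⟨a, ha⟩ := hshort
      refine Or.inl fun i => ?_
      have := L.len_div_two_eq_of_wellFailed (by simpa using h3) hG i a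
      have := L.len_pos i
      omega
    · refine Or.inr (L.card_eq_three_and_len_eq_two_of_wellFailed h3 (fun i => ?_) hG)
      have := L.len_pos i
      have : L.len i ≠ 1 := fun h => hshort ⟨i, h⟩
      omega
  · rintro (hlen | ⟨hcard, hlen⟩)
    · have : Nontrivial ι := Fintype.one_lt_card_iff_nontrivial.1 (by omega)
      exact L.wellFailed_of_len_eq_one hlen
    · exact L.wellFailed_of_len_eq_two hcard hlen

end WellFailed

end LegDecomposition

/-- The decomposition of `star_{2,2,2}` into the legs `0-1-2`, `0-3-4` and `0-5-6`. -/
def star222LegDecomposition : LegDecomposition star222 0 (Fin 3) where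
  len _ := 2
  vert i j := if j = 0 then 0 else Fin.ofNat 7 (2 * i + j)
  vert_zero _ := rfl
  len_pos _ := one_le_two
  exists_vert_eq := by decide
  vert_inj {i i' j j'} hj hj' := by
    interval_cases j <;> interval_cases j' <;> revert i i' <;> decide
  adj_iff {i i' j j'} hj hj' := by
    simp only [star222, SimpleGraph.fromRel_adj]
    interval_cases j <;> interval_cases j' <;> revert i i' <;> decide

theorem LegDecomposition.nonempty_iso_star222 {α ι : Type*} [Fintype ι] {G : SimpleGraph α} {c : α}
    (L : LegDecomposition G c ι) (hι : Fintype.card ι = 3) (hlen : ∀ i, L.len i = 2) :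
    Nonempty (G ≃g star222) :=
  L.nonempty_iso star222LegDecomposition (Fintype.equivFinOfCardEq hι) fun i => (hlen i).symm

theorem generalizedStar_wellFailed_iff (T : SimpleGraph V) (hT : T.IsTree) (c : V)
    (hc : 3 ≤ (T.neighborSet c).ncard)
    (huniq : ∀ w, 3 ≤ (T.neighborSet w).ncard → w = c) :
    (∀ W W' : Set V, MinimalFort T W → MinimalFort T W' → W.ncard = W'.ncard) ↔
      ((∀ w, w ≠ c → (T.neighborSet w).ncard = 1) ∨ Nonempty (T ≃g star222)) := by
  have hne : (T.neighborSet c).Nonempty := Set.nonempty_of_ncard_ne_zero (by omega)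
  have hdeg (w : V) (hw : w ≠ c) : (T.neighborSet w).ncard ≤ 2 :=
    Nat.le_of_lt_succ (not_le.1 (mt (huniq w) hw))
  obtain ⟨L⟩ := nonempty_legDecomposition hT hne hdeg
  have := Fintype.ofFinite {e // ∀ w, ¬ IsChild T c e w}
  have h3 : 3 ≤ Fintype.card {e // ∀ w, ¬ IsChild T c e w} := by
    rwa [← Nat.card_eq_fintype_card, L.natCard_eq_ncard_neighborSet]
  constructor
  · intro h
    rcases (L.wellFailed_iff h3).1 h with hlen | ⟨hcard, hlen⟩
    · exact Or.inl (L.forall_len_eq_one_iff.1 hlen)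
    · exact Or.inr (L.nonempty_iso_star222 hcard hlen)
  · rintro (hdeg1 | ⟨⟨e⟩⟩)
    · exact (L.wellFailed_iff h3).2 (Or.inl (L.forall_len_eq_one_iff.2 hdeg1))
    · exact (star222LegDecomposition.map e.symm).wellFailed_of_len_eq_two rfl fun _ => rfl
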